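/- arXiv:1803.10156 — 3 statements merged into one kernel-verified Lean document; each statement's English description precedes it below -/
import Mathlib

section
/- Let r : ℝ → ℝ be differentiable at c with r′(c) ≠ 0. Then the Extended Newton transformed function g(y) = (y − c)·r(y)/(r(y) − r(c)) tends to r(c)/r′(c) as y → c with y ≠ c (i.e. along the punctured neighborhood filter at c). In particular, if additionally r(c) ≠ 0, this limit is nonzero, so the transformation does not introduce a spurious root at y = c. -/
open Topology Filter

theorem sub_mul_div_sub_eq_div_slope {k : Type*} [Field k] (f : k → k) (a b x : k) :
    (b - a) * x / (f b - f a) = x / slope f a b := by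
  rw [slope_def_field, div_div_eq_mul_div, mul_comm]

theorem extendedNewton_no_spurious_root_general {𝕜 : Type*} [NontriviallyNormedField 𝕜]
    {r : 𝕜 → 𝕜} {r' c : 𝕜} (hr : HasDerivAt r r' c) (hr' : r' ≠ 0) :
    Tendsto (fun y => (y - c) * r y / (r y - r c)) (𝓝[≠] c) (𝓝 (r c / r')) ∧
    (r c ≠ 0 → r c / r' ≠ 0) := by
  have tendsto_r : Tendsto r (𝓝[≠] c) (𝓝 (r c)) :=
    hr.continuousAt.tendsto.mono_left nhdsWithin_le_nhds
  have tendsto_slope : Tendsto (slope r c) (𝓝[≠] c) (𝓝 r') := hr.tendsto_slope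
  simp only [sub_mul_div_sub_eq_div_slope]
  exact ⟨tendsto_r.div tendsto_slope hr', fun hrc => div_ne_zero hrc hr'⟩

/-- The Extended Newton transformed function tends to `r c / deriv r c` as `y → c`,
`y ≠ c`; in particular, if `r c ≠ 0` this limit is nonzero, so no spurious root is
introduced at `y = c`. -/
theorem extendedNewton_no_spurious_root (r : ℝ → ℝ) (c : ℝ)
    (hr : DifferentiableAt ℝ r c) (hd : deriv r c ≠ 0) :
    Filter.Tendsto (fun y => (y - c) * r y / (r y - r c)) (𝓝[≠] c)
      (𝓝 (r c / deriv r c)) ∧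
    (r c ≠ 0 → r c / deriv r c ≠ 0) :=
  extendedNewton_no_spurious_root_general hr.hasDerivAt hd
end

section
/- Let r : ℝ → ℝ, let c, x* ∈ ℝ with x* ≠ c, suppose r is differentiable at x*, r(x*) = 0, and r(c) ≠ 0. Then the Extended Newton transformed function g(y) = (y − c)·r(y)/(r(y) − r(c)) is differentiable at x* with g′(x*) = −(x* − c)·r′(x*)/r(c); in particular, if r′(x*) ≠ 0 (x* is a simple root of r), then g′(x*) ≠ 0, so x* is also a simple root of g. -/
/-!
The transformed function is `r` times the factor `(y - c) / (r y - r c)`, which at a root `x` of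
`r` is continuous with value `-(x - c) / r c`. Since `r` vanishes at `x`, each difference quotient
of the product at `x` is the factor times the difference quotient of `r`, so no derivative of the
factor is involved.
-/

section ExtendedNewton

variable {𝕜 : Type*} [NontriviallyNormedField 𝕜]

theorem hasDerivAt_smul_of_continuousAt_of_eq_zero {E : Type*} [NormedAddCommGroup E]
    [NormedSpace 𝕜 E] {h : 𝕜 → 𝕜} {f : 𝕜 → E} {f' : E} {x : 𝕜} (hh : ContinuousAt h x)
    (hf : HasDerivAt f f' x) (hfx : f x = 0) :
    HasDerivAt (fun y => h y • f y) (h x • f') x := by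
  have slope_smul : slope (fun y => h y • f y) x = fun y => h y • slope f x y := by
    funext y
    simp only [slope_def_module, hfx, smul_zero, sub_zero, smul_comm (h y)]
  rw [hasDerivAt_iff_tendsto_slope, slope_smul]
  exact (hh.tendsto.mono_left nhdsWithin_le_nhds).smul hf.tendsto_slope

/-- The Extended Newton transform `g` of `r` with parameter `c`; the Extended Newton method for
`r` is Newton's method for `g`. Where `r y = r c`, in particular at `y = c`, division by zero
gives it the value `0`. -/
def extendedNewton (r : 𝕜 → 𝕜) (c y : 𝕜) : 𝕜 :=
  (y - c) * r y / (r y - r c)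

variable {r : 𝕜 → 𝕜} {r' c x : 𝕜}

theorem hasDerivAt_extendedNewton_of_eq_zero (hr : HasDerivAt r r' x) (hroot : r x = 0)
    (hc : r c ≠ 0) : HasDerivAt (extendedNewton r c) (-(x - c) * r' / r c) x := by
  have denom_ne_zero : r x - r c ≠ 0 := by simpa [hroot] using hc
  have factor_continuousAt : ContinuousAt (fun y => (y - c) / (r y - r c)) x :=
    (continuousAt_id.sub continuousAt_const).div (hr.continuousAt.sub continuousAt_const)
      denom_ne_zero
  have hasDerivAt_factor_smul :=
    hasDerivAt_smul_of_continuousAt_of_eq_zero factor_continuousAt hr hroot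
  have extendedNewton_eq : extendedNewton r c = fun y => ((y - c) / (r y - r c)) • r y :=
    funext fun y => (div_mul_eq_mul_div _ _ _).symm
  rw [extendedNewton_eq]
  refine hasDerivAt_factor_smul.congr_deriv ?_
  rw [hroot, zero_sub, smul_eq_mul, div_neg, ← neg_div, div_mul_eq_mul_div]

theorem extendedNewton_simple_root_general (hr : DifferentiableAt 𝕜 r x) (hroot : r x = 0)
    (hc : r c ≠ 0) :
    DifferentiableAt 𝕜 (extendedNewton r c) x ∧
    deriv (extendedNewton r c) x = -(x - c) * deriv r x / r c ∧
    (deriv r x ≠ 0 → deriv (extendedNewton r c) x ≠ 0) := by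
  have hg := hasDerivAt_extendedNewton_of_eq_zero hr.hasDerivAt hroot hc
  have x_ne_c : x ≠ c := by
    rintro rfl
    exact hc hroot
  refine ⟨hg.differentiableAt, hg.deriv, fun simple => ?_⟩
  rw [hg.deriv]
  exact div_ne_zero (mul_ne_zero (neg_ne_zero.mpr (sub_ne_zero.mpr x_ne_c)) simple) hc

end ExtendedNewton

/-- At a root `x* ≠ c` of `r` with `r c ≠ 0`, the Extended Newton transformed function
`g y = (y - c) * r y / (r y - r c)` is differentiable with
`g'(x*) = -(x* - c) * r'(x*) / r c`; in particular simple roots of `r` are simple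
roots of `g`. -/
theorem extendedNewton_simple_root (r : ℝ → ℝ) (c xs : ℝ) (hxc : xs ≠ c)
    (hr : DifferentiableAt ℝ r xs) (hroot : r xs = 0) (hc : r c ≠ 0) :
    DifferentiableAt ℝ (fun y => (y - c) * r y / (r y - r c)) xs ∧
    deriv (fun y => (y - c) * r y / (r y - r c)) xs
      = -(xs - c) * deriv r xs / r c ∧
    (deriv r xs ≠ 0 → deriv (fun y => (y - c) * r y / (r y - r c)) xs ≠ 0) :=
  extendedNewton_simple_root_general hr hroot hc
end

section
/- Let r : ℝ → ℝ be twice continuously differentiable at x (ContDiffAt ℝ 2 r x), with r′(x) ≠ 0 and 2·r′(x)² − r(x)·r″(x) ≠ 0. Then the Extended Newton step, viewed as a function of the parameter c, Δ(c) = −(x − c)·r(x)·(r(x) − r(c)) / (r(x)·(r(x) − r(c)) − (x − c)·r′(x)·r(c)), tends to the Corrected Newton (Halley) step −2·r(x)·r′(x)/(2·r′(x)² − r(x)·r″(x)) = −(r(x)/r′(x)) / (1 − r(x)·r″(x)/(2·r′(x)²)) as c → x with c ≠ x (along the punctured neighborhood filter at x). -/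
open Topology Filter

/-!
Factor `r c - r x = (c - x) * s c` with `s = dslope r x`, so that `s x = r′(x)`. Both the numerator
and the denominator of the Extended Newton step then carry a factor `(c - x) ^ 2`, and cancelling it
leaves `-(r(x) s(c)) / (r′(x) s(c) - r(x) (s(c) - s(x)) / (c - x))`. By the second-order Taylor
formula `s′(x) = r″(x) / 2`, so this quotient converges to the Halley step.
-/

section Taylor

open Asymptotics

variable {𝕜 E : Type*} [RCLike 𝕜] [NormedAddCommGroup E] [NormedSpace 𝕜 E]
  {f f' : 𝕜 → E} {f'' : E} {x : 𝕜}

theorem isLittleO_pow_succ_of_hasDerivAt {n : ℕ} (hf : ∀ᶠ c in 𝓝 x, HasDerivAt f (f' c) c)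
    (hf' : f' =o[𝓝 x] fun c ↦ (c - x) ^ n) :
    (fun c ↦ f c - f x) =o[𝓝 x] fun c ↦ (c - x) ^ (n + 1) := by
  obtain ⟨δ, hδ, hball⟩ := Metric.eventually_nhds_iff_ball.1 hf
  have hnhds : 𝓝[Metric.ball x δ] x = 𝓝 x := nhdsWithin_eq_nhds.2 (Metric.ball_mem_nhds x hδ)
  have hfderiv : (fun c ↦ ContinuousLinearMap.toSpanSingleton 𝕜 (f' c)) =o[𝓝[Metric.ball x δ] x]
      fun c ↦ ‖c - x‖ ^ n := by
    rw [hnhds, ← isLittleO_norm_left]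
    simpa only [ContinuousLinearMap.norm_toSpanSingleton, norm_pow] using hf'.norm_norm
  have hgrowth := (convex_ball x δ).isLittleO_pow_succ (Metric.mem_ball_self hδ)
    (fun c hc ↦ (hball c hc).hasDerivWithinAt.hasFDerivWithinAt) hfderiv
  rw [hnhds] at hgrowth
  simpa only [← norm_pow, isLittleO_norm_right] using hgrowth

theorem isLittleO_sub_taylor_two (hf : ∀ᶠ c in 𝓝 x, HasDerivAt f (f' c) c)
    (hf' : HasDerivAt f' f'' x) :
    (fun c ↦ f c - f x - (c - x) • f' x - ((c - x) ^ 2 / 2) • f'') =o[𝓝 x]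
      fun c ↦ (c - x) ^ 2 := by
  have hderiv : ∀ᶠ c in 𝓝 x,
      HasDerivAt (fun c ↦ f c - f x - (c - x) • f' x - ((c - x) ^ 2 / 2) • f'')
        (f' c - f' x - (c - x) • f'') c := by
    filter_upwards [hf] with c hc
    have hlin : HasDerivAt (fun c ↦ c - x) 1 c := (hasDerivAt_id c).sub_const x
    have hquad : HasDerivAt (fun c ↦ (c - x) ^ 2 / 2) (c - x) c :=
      ((hlin.fun_pow 2).div_const 2).congr_deriv (by simp)
    simpa using
      ((hc.sub_const (f x)).fun_sub (hlin.smul_const (f' x))).fun_sub (hquad.smul_const f'')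
  have hsmall : (fun c ↦ f' c - f' x - (c - x) • f'') =o[𝓝 x] fun c ↦ (c - x) ^ 1 := by
    simpa only [pow_one] using hasDerivAt_iff_isLittleO.1 hf'
  simpa using isLittleO_pow_succ_of_hasDerivAt hderiv hsmall

theorem hasDerivAt_dslope_same (hf : ∀ᶠ c in 𝓝 x, DifferentiableAt 𝕜 f c)
    (hf' : HasDerivAt (deriv f) f'' x) : HasDerivAt (dslope f x) ((2 : 𝕜)⁻¹ • f'') x := by
  have htaylor := isLittleO_sub_taylor_two (hf.mono fun _ hc ↦ hc.hasDerivAt) hf'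
  have hrem : Tendsto (fun c ↦ ((c - x) ^ 2)⁻¹ •
      (f c - f x - (c - x) • deriv f x - ((c - x) ^ 2 / 2) • f'') + (2 : 𝕜)⁻¹ • f'')
      (𝓝[≠] x) (𝓝 ((2 : 𝕜)⁻¹ • f'')) := by
    simpa only [zero_add] using
      (htaylor.tendsto_inv_smul_nhds_zero.mono_left nhdsWithin_le_nhds).add_const _
  refine hasDerivAt_iff_tendsto_slope.2 (hrem.congr' ?_)
  filter_upwards [self_mem_nhdsWithin] with c hc
  have hcx : c - x ≠ 0 := sub_ne_zero.2 hc
  rw [slope_def_module, dslope_same, dslope_of_ne f hc, slope_def_module]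
  match_scalars <;> field

end Taylor

-- `deriv f` takes the junk value `0` wherever `f` is not differentiable.
theorem eventually_differentiableAt_of_deriv_ne_zero {𝕜 E : Type*} [NontriviallyNormedField 𝕜]
    [NormedAddCommGroup E] [NormedSpace 𝕜 E] {f : 𝕜 → E} {x : 𝕜}
    (hcont : ContinuousAt (deriv f) x) (hd : deriv f x ≠ 0) :
    ∀ᶠ c in 𝓝 x, DifferentiableAt 𝕜 f c :=
  (hcont.eventually_ne hd).mono fun _ ↦ differentiableAt_of_deriv_ne_zero

section NewtonSteps

variable {𝕜 : Type*} [NontriviallyNormedField 𝕜] {r : 𝕜 → 𝕜} {x c q : 𝕜}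

/-- The Extended Newton step `Δx^EN` at `x` with parameter `c`: the Newton step at `x` for the
equation `(y - c) * r y / (r y - r c) = 0`. The value at `c = x` is the junk value `0 / 0 = 0`. -/
noncomputable def extendedNewtonStep (r : 𝕜 → 𝕜) (x c : 𝕜) : 𝕜 :=
  -((x - c) * r x * (r x - r c)) / (r x * (r x - r c) - (x - c) * deriv r x * r c)

/-- The Corrected Newton step `Δx^CN` at `x`, written as the Newton step `-r x / r′ x` divided by
Halley's correction factor. -/
noncomputable def correctedNewtonStep (r : 𝕜 → 𝕜) (x : 𝕜) : 𝕜 :=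
  -(r x / deriv r x) / (1 - r x * deriv (deriv r) x / (2 * (deriv r x) ^ 2))

theorem extendedNewtonStep_eq_dslope (hc : c ≠ x) :
    extendedNewtonStep r x c =
      -(r x * dslope r x c) / (deriv r x * dslope r x c - r x * slope (dslope r x) x c) := by
  have hcx : c - x ≠ 0 := sub_ne_zero.2 hc
  have hr : r c = r x + (c - x) * dslope r x c := by
    rw [← smul_eq_mul, sub_smul_dslope, add_sub_cancel]
  have hs : dslope r x c = deriv r x + (c - x) * slope (dslope r x) x c := by
    rw [← smul_eq_mul, sub_smul_slope, vsub_eq_sub, dslope_same, add_sub_cancel]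
  rw [← mul_div_mul_left _ _ (pow_ne_zero 2 hcx), extendedNewtonStep, hr]
  congr 1
  · ring
  · linear_combination (-(c - x) * r x) * hs

theorem tendsto_extendedNewtonStep (hq : HasDerivAt (dslope r x) q x)
    (hden : deriv r x * deriv r x - r x * q ≠ 0) :
    Tendsto (extendedNewtonStep r x) (𝓝[≠] x)
      (𝓝 (-(r x * deriv r x) / (deriv r x * deriv r x - r x * q))) := by
  have hs : Tendsto (dslope r x) (𝓝[≠] x) (𝓝 (deriv r x)) := by
    simpa only [dslope_same] using hq.continuousAt.tendsto.mono_left nhdsWithin_le_nhds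
  refine ((hs.const_mul (r x)).neg.div
    ((hs.const_mul (deriv r x)).sub (hq.tendsto_slope.const_mul (r x))) hden).congr' ?_
  filter_upwards [self_mem_nhdsWithin] with c hc
  exact (extendedNewtonStep_eq_dslope hc).symm

theorem correctedNewtonStep_eq_halley [NeZero (2 : 𝕜)] (hd : deriv r x ≠ 0) :
    correctedNewtonStep r x =
      -(2 * r x * deriv r x) / (2 * (deriv r x) ^ 2 - r x * deriv (deriv r) x) := by
  rw [correctedNewtonStep, one_sub_div (mul_ne_zero two_ne_zero (pow_ne_zero 2 hd))]
  field_simp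

end NewtonSteps

theorem extendedNewton_tendsto_correctedNewton_general {𝕜 : Type*} [RCLike 𝕜] {r : 𝕜 → 𝕜} {x : 𝕜}
    (hr : DifferentiableAt 𝕜 (deriv r) x) (hd : deriv r x ≠ 0)
    (hden : 2 * (deriv r x) ^ 2 - r x * deriv (deriv r) x ≠ 0) :
    Tendsto (extendedNewtonStep r x) (𝓝[≠] x) (𝓝 (correctedNewtonStep r x)) := by
  have hdiff := eventually_differentiableAt_of_deriv_ne_zero hr.continuousAt hd
  have hdslope := hasDerivAt_dslope_same hdiff hr.hasDerivAt
  have hden_eq : 2 * (deriv r x) ^ 2 - r x * deriv (deriv r) x =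
      2 * (deriv r x * deriv r x - r x * ((2 : 𝕜)⁻¹ • deriv (deriv r) x)) := by
    rw [smul_eq_mul]
    field_simp
  have hlim := tendsto_extendedNewtonStep hdslope (right_ne_zero_of_mul (hden_eq ▸ hden))
  rwa [correctedNewtonStep_eq_halley hd, hden_eq, mul_assoc, ← mul_neg,
    mul_div_mul_left _ _ two_ne_zero]

/-- As `c → x` (with `c ≠ x`), the Extended Newton step tends to the Corrected
Newton (Halley) step. -/
theorem extendedNewton_tendsto_correctedNewton (r : ℝ → ℝ) (x : ℝ)
    (hr : ContDiffAt ℝ 2 r x) (hd : deriv r x ≠ 0)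
    (hden : 2 * (deriv r x) ^ 2 - r x * deriv (deriv r) x ≠ 0) :
    Filter.Tendsto
      (fun c => -((x - c) * r x * (r x - r c))
        / (r x * (r x - r c) - (x - c) * deriv r x * r c)) (𝓝[≠] x)
      (𝓝 (-(2 * r x * deriv r x) / (2 * (deriv r x) ^ 2 - r x * deriv (deriv r) x))) ∧
    -(2 * r x * deriv r x) / (2 * (deriv r x) ^ 2 - r x * deriv (deriv r) x)
      = -(r x / deriv r x) / (1 - r x * deriv (deriv r) x / (2 * (deriv r x) ^ 2)) := by
  have hr' : ContDiffAt ℝ 1 (deriv r) x := hr.derivWithin (by norm_num)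
  have halley := correctedNewtonStep_eq_halley hd
  exact ⟨halley ▸ extendedNewton_tendsto_correctedNewton_general
    (hr'.differentiableAt one_ne_zero) hd hden, halley.symm⟩
end
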